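/- Let n ≥ 2 and let k = min{ j ∈ ℤ⁺ : 3^j ≥ √n }. Suppose m is a positive integer with √n < m < 3^k (note that automatically 3^k < 3√n). Then there exist integers 1 ≤ a < b ≤ n such that b³ + b ≡ a³ + a (mod m²). -/

import Mathlib

/-- A collision of `x ^ 3 + x` modulo `m ^ 2` inside `[1, n]`. -/
def Col (m n : ℕ) : Prop :=
  ∃ a b : ℕ, 1 ≤ a ∧ a < b ∧ b ≤ n ∧ b ^ 3 + b ≡ a ^ 3 + a [MOD m ^ 2]

lemma col_of_int (m n : ℕ) (a b : ℤ) (ha : 1 ≤ a) (han : a ≤ n) (hb : 1 ≤ b) (hbn : b ≤ n)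
    (hab : a ≠ b) (h : (m : ℤ) ^ 2 ∣ (b - a) * (a ^ 2 + a * b + b ^ 2 + 1)) : Col m n := by
  lift a to ℕ using (by omega)
  lift b to ℕ using (by omega)
  rcases lt_or_gt_of_ne hab with h1 | h1
  · refine ⟨a, b, by omega, by omega, by omega, ?_⟩
    apply Nat.ModEq.symm
    rw [Nat.modEq_iff_dvd]
    convert h using 1 <;> push_cast <;> ring
  · refine ⟨b, a, by omega, by omega, by omega, ?_⟩
    rw [Nat.modEq_iff_dvd]
    convert h using 1 <;> push_cast <;> ring

lemma rounding_pos (E S : ℤ) (hS : 0 < S) : ∃ q, 2 * |E + S * q| ≤ S := by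
  have h1 := Int.emod_add_mul_ediv E S
  have h2 := Int.emod_nonneg E hS.ne'
  have h3 := Int.emod_lt_of_pos E hS
  rcases le_or_gt (2 * (E % S)) S with h | h
  · refine ⟨-(E / S), ?_⟩
    have : E + S * -(E / S) = E % S := by linarith
    rw [this, abs_of_nonneg h2]; exact h
  · refine ⟨-(E / S) - 1, ?_⟩
    have : E + S * (-(E / S) - 1) = E % S - S := by linarith
    rw [this, abs_of_nonpos (by linarith)]; linarith

lemma rounding (E S : ℤ) (hS : S ≠ 0) : ∃ q, 2 * |E + S * q| ≤ |S| := by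
  rcases lt_or_gt_of_ne hS with h | h
  · obtain ⟨q, hq⟩ := rounding_pos E (-S) (by omega)
    refine ⟨-q, ?_⟩
    rw [abs_of_neg h]
    convert hq using 3
    ring
  · rw [abs_of_pos h]; exact rounding_pos E S h

lemma hensel (p : ℕ) (hp : p.Prime) (α β γ s0 : ℤ)
    (h0 : (p : ℤ) ∣ α * s0 ^ 2 + β * s0 + γ) (h1 : ¬ (p : ℤ) ∣ 2 * α * s0 + β) (N : ℕ) :
    ∃ s : ℤ, (p : ℤ) ∣ s - s0 ∧ (p : ℤ) ^ (N + 1) ∣ α * s ^ 2 + β * s + γ := by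
  induction N with
  | zero => exact ⟨s0, by simp, by simpa using h0⟩
  | succ N ih =>
    obtain ⟨s, hs, r, hr⟩ := ih
    have hd : ¬ (p : ℤ) ∣ 2 * α * s + β := by
      intro h
      apply h1
      have : 2 * α * s0 + β = (2 * α * s + β) - 2 * α * (s - s0) := by ring
      rw [this]
      exact dvd_sub h (Dvd.dvd.mul_left hs _)
    have hc : IsCoprime (p : ℤ) (2 * α * s + β) :=
      (Prime.coprime_iff_not_dvd (Nat.prime_iff_prime_int.mp hp)).mpr hd
    obtain ⟨x, y, hxy⟩ := hc
    refine ⟨s + (p : ℤ) ^ (N + 1) * (-r * y), ?_, ?_⟩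
    · have : s + (p : ℤ) ^ (N + 1) * (-r * y) - s0 = (s - s0) + p * (p ^ N * (-r * y)) := by ring
      rw [this]
      exact dvd_add hs (Dvd.intro _ rfl)
    · refine ⟨r * x + α * p ^ N * (r * y) ^ 2, ?_⟩
      have e : α * (s + (p : ℤ) ^ (N + 1) * (-r * y)) ^ 2 + β * (s + (p : ℤ) ^ (N + 1) * (-r * y)) + γ
          = (α * s ^ 2 + β * s + γ) - (p : ℤ) ^ (N + 1) * r * (y * (2 * α * s + β))
            + α * ((p : ℤ) ^ (N + 1)) ^ 2 * (r * y) ^ 2 := by ring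
      rw [e, hr, show y * (2 * α * s + β) = 1 - x * p by linarith]
      ring

/-- The rounding step in the lattice argument: the dominant coordinate is the first one. -/
lemma lattice_bound (P k h n u v A B : ℤ) (hP : 0 < P) (hh : 10 ≤ h) (hkP : 900 ≤ k * P)
    (hh2 : 10 * h ≤ k * P) (hn : k * P ^ 2 ≤ 9 * (n - 1))
    (hu : |u| = h) (hv : |v| ≤ h) (hA : |A| ≤ P * h) (hdet : |u * B - v * A| ≤ P ^ 2 * k) :
    |A| ≤ n - 1 ∧ |B| ≤ n - 1 := by

  have key : 9 * (k * P) + 9 * h ^ 2 ≤ h * (k * P) := by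
    nlinarith [mul_nonneg (sub_nonneg.mpr hh) (sub_nonneg.mpr hh2)]
  constructor
  · have : P * h * 10 ≤ k * P ^ 2 := by nlinarith
    have : 0 ≤ P * h := by positivity
    linarith
  · have h1 : |u * B| ≤ |u * B - v * A| + |v * A| := by
      have := abs_add_le (u * B - v * A) (v * A)
      simpa using this
    rw [abs_mul, abs_mul, hu] at h1
    have h2 : |v| * |A| ≤ h * (P * h) := mul_le_mul hv hA (abs_nonneg _) (by linarith)
    have h3 : h * |B| ≤ P ^ 2 * k + h * (P * h) := by linarith
    have h4 : P * (9 * (k * P) + 9 * h ^ 2) ≤ P * (h * (k * P)) :=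
      mul_le_mul_of_nonneg_left key hP.le
    have h5 : h * (k * P ^ 2) ≤ h * (9 * (n - 1)) := mul_le_mul_of_nonneg_left hn (by linarith)
    have h6 : h * |B| ≤ h * (n - 1) := by nlinarith
    exact le_of_mul_le_mul_left h6 (by linarith)
lemma lattice (P k x y s n : ℤ) (hP : 0 < P) (hk : 0 < k) (hcop : IsCoprime x y)
    (hkP : IsCoprime k P) (h900 : 900 ≤ k * P) (hn : k * P ^ 2 ≤ 9 * (n - 1))
    (hs : P ∣ 3 * s ^ 2 * (x ^ 2 + x * (x + k * y) + (x + k * y) ^ 2) + 1)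
    (hh : 10 ≤ max |x| |x + k * y|) (hh2 : 10 * max |x| |x + k * y| ≤ k * P) :
    ∃ a b : ℤ, 1 ≤ a ∧ a ≤ n ∧ 1 ≤ b ∧ b ≤ n ∧ k ∣ b - a ∧
      P ^ 2 ∣ a ^ 2 + a * b + b ^ 2 + 1 := by
  -- make `s` divisible by `k`
  obtain ⟨s', hs'k, hs'⟩ : ∃ s' : ℤ, k ∣ s' ∧
      P ∣ 3 * s' ^ 2 * (x ^ 2 + x * (x + k * y) + (x + k * y) ^ 2) + 1 := by
    obtain ⟨α, β, hαβ⟩ := hkP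
    refine ⟨k * (α * s), Dvd.intro _ rfl, ?_⟩
    have e : k * (α * s) = s - P * (β * s) := by linear_combination s * hαβ
    rw [e]
    obtain ⟨r, hr⟩ := hs
    refine ⟨r + 3 * (-2 * s * (β * s) + P * (β * s) ^ 2) *
      (x ^ 2 + x * (x + k * y) + (x + k * y) ^ 2), ?_⟩
    linear_combination hr
  clear hs
  set u := x with hu
  set v := x + k * y with hv
  obtain ⟨r, hr⟩ := hs'
  -- solve the linear congruence
  obtain ⟨δ, ρ, hδ⟩ : ∃ δ ρ : ℤ, r + 3 * s' * k * δ = P * ρ := by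
    have h1 : IsCoprime (3 * s' * k) P := by
      apply IsCoprime.mul_left _ hkP
      refine ⟨-(s' * (u ^ 2 + u * v + v ^ 2)), r, ?_⟩
      linear_combination -hr
    obtain ⟨α, β, hαβ⟩ := h1
    exact ⟨-r * α, r * β, by linear_combination (-r) * hαβ⟩
  obtain ⟨β, α, hβα⟩ := hcop
  -- β * x + α * y = 1
  set a0 := -s' * (u + 2 * v) with ha0
  set b0 := s' * (2 * u + v) with hb0
  obtain ⟨q, hq⟩ := rounding (2 * (u * b0 - v * a0) + 2 * P * k * δ - (n + 1) * (u - v))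
    (2 * P ^ 2 * k) (by positivity)
  rw [abs_of_pos (show 0 < 2 * P ^ 2 * k by positivity)] at hq
  set j := δ + P * q with hj
  have main : ∀ i : ℤ, ∃ a b : ℤ, a = a0 + P * (j * (-α) + i * x) ∧
      b = b0 + P * (j * (-α) + i * x + k * (j * β + i * y)) ∧
      k ∣ b - a ∧ P ^ 2 ∣ a ^ 2 + a * b + b ^ 2 + 1 ∧
      |u * (2 * b - (n + 1)) - v * (2 * a - (n + 1))| ≤ P ^ 2 * k := by
    intro i
    refine ⟨_, _, rfl, rfl, ?_, ?_, ?_⟩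
    · obtain ⟨t, ht⟩ := hs'k
      refine ⟨3 * t * (u + v) + P * (j * β + i * y), ?_⟩
      rw [ha0, hb0, ht]; ring
    · set wu := j * (-α) + i * x with hwu
      set wv := wu + k * (j * β + i * y) with hwv
      have hdet : u * wv - v * wu = k * j := by
        rw [hwv, hwu, hv]
        linear_combination (k * j) * hβα
      refine ⟨ρ + 3 * s' * k * q + wu ^ 2 + wu * wv + wv ^ 2, ?_⟩
      rw [ha0, hb0]
      linear_combination hr + P * hδ + 3 * P * s' * hdet + 3 * P * s' * k * hj
    · have e : u * (2 * (b0 + P * (j * (-α) + i * x + k * (j * β + i * y))) - (n + 1))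
          - v * (2 * (a0 + P * (j * (-α) + i * x)) - (n + 1)) =
          2 * (u * b0 - v * a0) + 2 * P * k * δ - (n + 1) * (u - v) + 2 * P ^ 2 * k * q := by
        linear_combination (2 * P * k * j) * hβα + 2 * P * k * hj - 2 * P * (j * (-α) + i * x) * hv
      rw [e]; linarith
  have fin : ∀ a : ℤ, |2 * a - (n + 1)| ≤ n - 1 → 1 ≤ a ∧ a ≤ n := by
    intro a h
    rw [abs_le] at h
    constructor <;> linarith [h.1, h.2]
  rcases le_total |v| |u| with hc | hc
  · rw [max_eq_left hc] at hh hh2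
    have hu0 : u ≠ 0 := by
      intro h; rw [h] at hh; simp at hh
    obtain ⟨i, hi⟩ := rounding (2 * (a0 + P * (j * (-α))) - (n + 1)) (2 * P * u)
      (by positivity)
    obtain ⟨a, b, h1, h2, h3, h4, h5⟩ := main i
    have e : 2 * (a0 + P * (j * (-α))) - (n + 1) + 2 * P * u * i = 2 * a - (n + 1) := by
      rw [h1]; ring
    rw [e, abs_mul, abs_of_pos (show 0 < 2 * P by positivity)] at hi
    obtain ⟨hA, hB⟩ := lattice_bound P k |u| n u v (2 * a - (n + 1)) (2 * b - (n + 1)) hP hh h900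
      hh2 hn rfl hc (by linarith) h5
    exact ⟨a, b, (fin a hA).1, (fin a hA).2, (fin b hB).1, (fin b hB).2, h3, h4⟩
  · rw [max_eq_right hc] at hh hh2
    have hv0 : v ≠ 0 := by
      intro h; rw [h] at hh; simp at hh
    obtain ⟨i, hi⟩ := rounding (2 * (b0 + P * (j * (-α) + k * (j * β))) - (n + 1)) (2 * P * v)
      (by positivity)
    obtain ⟨a, b, h1, h2, h3, h4, h5⟩ := main i
    have e : 2 * (b0 + P * (j * (-α) + k * (j * β))) - (n + 1) + 2 * P * v * i
        = 2 * b - (n + 1) := by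
      rw [h2]; linear_combination (2 * P * i) * hv
    rw [e, abs_mul, abs_of_pos (show 0 < 2 * P by positivity)] at hi
    rw [abs_sub_comm] at h5
    obtain ⟨hB, hA⟩ := lattice_bound P k |v| n v u (2 * b - (n + 1)) (2 * a - (n + 1)) hP hh h900
      hh2 hn rfl hc (by linarith) h5
    exact ⟨a, b, (fin a hA).1, (fin a hA).2, (fin b hB).1, (fin b hB).2, h3, h4⟩
/-- The norm form in the coordinates `(x, x + k y)`. -/
def NF (k x y : ℤ) : ℤ := x ^ 2 + x * (x + k * y) + (x + k * y) ^ 2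

lemma rot_aux (k r l : ℤ) (hl : Prime l) (hdet : r ^ 2 - r * k + k ^ 2 = l)
    (htr : ¬ l ∣ 2 * r - k) (x y : ℤ) (hc : IsCoprime x y)
    (hW : ¬ (l ∣ (r + k) * x + k ^ 2 * y ∧ l ∣ -3 * x + (r - 2 * k) * y)) :
    ∃ x' y' : ℤ, IsCoprime x' y' ∧ NF k x' y' = l ^ 2 * NF k x y := by
  obtain ⟨x1, hx1⟩ : ∃ x1, x1 = (r + k) * x + k ^ 2 * y := ⟨_, rfl⟩
  obtain ⟨y1, hy1⟩ : ∃ y1, y1 = -3 * x + (r - 2 * k) * y := ⟨_, rfl⟩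
  obtain ⟨x2, hx2⟩ : ∃ x2, x2 = (r + k) * x1 + k ^ 2 * y1 := ⟨_, rfl⟩
  obtain ⟨y2, hy2⟩ : ∃ y2, y2 = -3 * x1 + (r - 2 * k) * y1 := ⟨_, rfl⟩
  rw [← hx1, ← hy1] at hW
  refine ⟨x2, y2, ?_, ?_⟩
  · apply isCoprime_of_prime_dvd
    · rintro ⟨h1, h2⟩
      -- both vanish: then `l x1 = 0` and `l y1 = 0`
      have e1 : l * x1 = (r - 2 * k) * x2 - k ^ 2 * y2 := by
        rw [hx2, hy2, ← hdet]; ring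
      have e2 : l * y1 = 3 * x2 + (r + k) * y2 := by
        rw [hx2, hy2, ← hdet]; ring
      rw [h1, h2] at e1 e2
      have z1 : x1 = 0 := by simpa [hl.ne_zero] using e1
      have z2 : y1 = 0 := by simpa [hl.ne_zero] using e2
      exact hW ⟨z1 ▸ dvd_zero l, z2 ▸ dvd_zero l⟩
    · intro q hq hqx hqy
      have e1 : l * x1 = (r - 2 * k) * x2 - k ^ 2 * y2 := by
        rw [hx2, hy2, ← hdet]; ring
      have e2 : l * y1 = 3 * x2 + (r + k) * y2 := by
        rw [hx2, hy2, ← hdet]; ring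
      have e3 : l * x = (r - 2 * k) * x1 - k ^ 2 * y1 := by
        rw [hx1, hy1, ← hdet]; ring
      have e4 : l * y = 3 * x1 + (r + k) * y1 := by
        rw [hx1, hy1, ← hdet]; ring
      have d1 : q ∣ l * x1 := by rw [e1]; exact dvd_sub (hqx.mul_left _) (hqy.mul_left _)
      have d2 : q ∣ l * y1 := by rw [e2]; exact dvd_add (hqx.mul_left _) (hqy.mul_left _)
      have hql : q ∣ l := by
        by_contra hnl
        have d1' := (hq.dvd_or_dvd d1).resolve_left hnl
        have d2' := (hq.dvd_or_dvd d2).resolve_left hnl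
        have d3 : q ∣ l * x := by rw [e3]; exact dvd_sub (d1'.mul_left _) (d2'.mul_left _)
        have d4 : q ∣ l * y := by rw [e4]; exact dvd_add (d1'.mul_left _) (d2'.mul_left _)
        exact hq.not_isUnit (hc.isUnit_of_dvd' ((hq.dvd_or_dvd d3).resolve_left hnl)
          ((hq.dvd_or_dvd d4).resolve_left hnl))
      have hlq : l ∣ q := (hq.associated_of_dvd hl hql).symm.dvd
      have f1 : (2 * r - k) * x1 = x2 + l * x := by
        rw [hx2, hx1, hy1, ← hdet]; ring
      have f2 : (2 * r - k) * y1 = y2 + l * y := by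
        rw [hy2, hx1, hy1, ← hdet]; ring
      apply hW
      constructor
      · have : l ∣ (2 * r - k) * x1 := by
          rw [f1]; exact dvd_add (hlq.trans hqx) (Dvd.intro _ rfl)
        exact (hl.dvd_or_dvd this).resolve_left htr
      · have : l ∣ (2 * r - k) * y1 := by
          rw [f2]; exact dvd_add (hlq.trans hqy) (Dvd.intro _ rfl)
        exact (hl.dvd_or_dvd this).resolve_left htr
  · have g1 : NF k x1 y1 = l * NF k x y := by
      rw [hx1, hy1, ← hdet]; unfold NF; ring
    have g2 : NF k x2 y2 = l * NF k x1 y1 := by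
      rw [hx2, hy2, ← hdet]; unfold NF; ring
    rw [g2, g1]; ring

lemma rot_step (k r l : ℤ) (hl : Prime l) (hdet : r ^ 2 - r * k + k ^ 2 = l)
    (htr : ¬ l ∣ 2 * r - k) (x y : ℤ) (hc : IsCoprime x y) :
    ∃ x' y' : ℤ, IsCoprime x' y' ∧ NF k x' y' = l ^ 2 * NF k x y := by
  by_cases h : l ∣ (r + k) * x + k ^ 2 * y ∧ l ∣ -3 * x + (r - 2 * k) * y
  · refine rot_aux k (k - r) l hl (by rw [← hdet]; ring) ?_ x y hc ?_
    · intro h'; apply htr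
      have := (dvd_neg).mpr h'
      rwa [show -(2 * (k - r) - k) = 2 * r - k by ring] at this
    · rintro ⟨h1, h2⟩
      have d1 : l ∣ (2 * r - k) * x := by
        have := dvd_sub h.1 h1
        rwa [show (r + k) * x + k ^ 2 * y - ((k - r + k) * x + k ^ 2 * y) = (2 * r - k) * x by ring]
          at this
      have d2 : l ∣ (2 * r - k) * y := by
        have := dvd_sub h.2 h2
        rwa [show -3 * x + (r - 2 * k) * y - (-3 * x + (k - r - 2 * k) * y) = (2 * r - k) * y by ring]
          at this
      exact hl.not_isUnit (hc.isUnit_of_dvd' ((hl.dvd_or_dvd d1).resolve_left htr)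
          ((hl.dvd_or_dvd d2).resolve_left htr))
  · exact rot_aux k r l hl hdet htr x y hc h

lemma NF_four (k x y : ℤ) : 4 * NF k x y = (2 * x + (x + k * y)) ^ 2 + 3 * (x + k * y) ^ 2 := by
  unfold NF; ring

/-- Rotate until the norm is at least 300. -/
lemma rot_many (p : ℕ) (hp : p.Prime) (k r l B : ℤ) (hl : Prime l)
    (hdet : r ^ 2 - r * k + k ^ 2 = l) (htr : ¬ l ∣ 2 * r - k) (hl2 : 2 ≤ l)
    (hpl : ¬ (p : ℤ) ∣ l) (hB : 300 * l ^ 2 ≤ B) (d : ℕ) :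
    ∀ x y s : ℤ, IsCoprime x y → (p : ℤ) ∣ 3 * s ^ 2 * NF k x y + 1 → 1 ≤ NF k x y →
      NF k x y ≤ B → 300 - NF k x y ≤ d →
    ∃ x y s : ℤ, IsCoprime x y ∧ (p : ℤ) ∣ 3 * s ^ 2 * NF k x y + 1 ∧ 300 ≤ NF k x y ∧
      NF k x y ≤ B := by
  induction d with
  | zero =>
    intro x y s h1 h2 h3 h4 h5
    exact ⟨x, y, s, h1, h2, by push_cast at h5; linarith, h4⟩
  | succ d ih =>
    intro x y s h1 h2 h3 h4 h5
    by_cases h6 : 300 ≤ NF k x y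
    · exact ⟨x, y, s, h1, h2, h6, h4⟩
    · obtain ⟨x', y', hc, hN⟩ := rot_step k r l hl hdet htr x y h1
      have hcop : IsCoprime (p : ℤ) l :=
        (Prime.coprime_iff_not_dvd (Nat.prime_iff_prime_int.mp hp)).mpr hpl
      obtain ⟨α, β, hαβ⟩ := hcop
      push Not at h6
      have hl4 : 4 ≤ l ^ 2 := by nlinarith
      refine ih x' y' (β * s) hc ?_ ?_ ?_ ?_
      · rw [hN]
        have e : 3 * (β * s) ^ 2 * (l ^ 2 * NF k x y) + 1 =
            (3 * s ^ 2 * NF k x y + 1) + p * (α * (p * α - 2) * (3 * s ^ 2 * NF k x y)) := by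
          have : β * l = 1 - α * p := by linarith
          have e' : 3 * (β * s) ^ 2 * (l ^ 2 * NF k x y) + 1 = (β * l) ^ 2 * (3 * s ^ 2 * NF k x y) + 1 := by
            ring
          rw [e', this]; ring
        rw [e]
        exact dvd_add h2 (Dvd.intro _ rfl)
      · rw [hN]; nlinarith
      · rw [hN]; nlinarith
      · rw [hN]; push_cast at h5; nlinarith

lemma NF_size (k x y h : ℤ) (hh : h = max |x| |x + k * y|) :
    NF k x y ≤ 3 * h ^ 2 ∧ 3 * h ^ 2 ≤ 4 * NF k x y := by
  have hx : |x| ≤ h := hh ▸ le_max_left _ _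
  have hv : |x + k * y| ≤ h := hh ▸ le_max_right _ _
  obtain ⟨v, hv'⟩ : ∃ v, v = x + k * y := ⟨_, rfl⟩
  unfold NF
  rw [← hv'] at hv hh ⊢
  have h1 : x ^ 2 ≤ h ^ 2 := sq_le_sq' (by linarith [neg_abs_le x]) (by linarith [le_abs_self x])
  have h2 : v ^ 2 ≤ h ^ 2 := sq_le_sq' (by linarith [neg_abs_le v]) (by linarith [le_abs_self v])
  constructor
  · nlinarith [sq_nonneg (x - v)]
  · rcases max_choice |x| |v| with h' | h' <;> rw [h'] at hh
    · rw [hh, sq_abs]; nlinarith [sq_nonneg (x + 2 * v)]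
    · rw [hh, sq_abs]; nlinarith [sq_nonneg (v + 2 * x)]

lemma conic_root (p : ℕ) (hp : p.Prime) (hp5 : 5 ≤ p) :
    ∃ U V : ZMod p, 3 * U ^ 2 + 9 * V ^ 2 + 4 = 0 := by
  have := Fact.mk hp
  have h3 : (3 : ZMod p) ≠ 0 := by
    intro h
    have : ((3 : ℕ) : ZMod p) = 0 := by exact_mod_cast h
    rw [ZMod.natCast_eq_zero_iff] at this
    have := Nat.le_of_dvd (by norm_num) this
    omega
  have h9 : (9 : ZMod p) ≠ 0 := by
    have : (9 : ZMod p) = 3 * 3 := by norm_num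
    rw [this]; exact mul_ne_zero h3 h3
  have d1 : (Polynomial.C (3 : ZMod p) * Polynomial.X ^ 2).degree = 2 := by
    rw [Polynomial.degree_C_mul_X_pow 2 h3]; rfl
  have d2 : (Polynomial.C (9 : ZMod p) * Polynomial.X ^ 2 + Polynomial.C 4).degree = 2 := by
    have := Polynomial.degree_quadratic (R := ZMod p) (a := 9) (b := 0) (c := 4) h9
    simpa using this
  obtain ⟨U, V, h⟩ := FiniteField.exists_root_sum_quadratic d1 d2
    (by rw [ZMod.card]; exact (hp.eq_two_or_odd).resolve_left (by omega))
  refine ⟨U, V, ?_⟩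
  simp at h
  linear_combination h
lemma natCast_ne (p : ℕ) (hp5 : 5 ≤ p) (c : ℕ) (h0 : 0 < c) (h5 : c < 5) : ((c : ℕ) : ZMod p) ≠ 0 := by
  intro h
  rw [ZMod.natCast_eq_zero_iff] at h
  have := Nat.le_of_dvd h0 h
  omega

/-- A short good vector, by Dirichlet approximation. -/
lemma start_vec (p : ℕ) (hp : p.Prime) (hp5 : 5 ≤ p) (k : ℕ)
    (hkp : ¬ p ∣ k) (hroot : ∀ a : ℤ, ¬ (p : ℤ) ∣ 3 * a ^ 2 + 1) :
    ∃ x y s : ℤ, IsCoprime x y ∧ (p : ℤ) ∣ 3 * s ^ 2 * NF k x y + 1 ∧ 1 ≤ NF k x y ∧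
      x ^ 2 ≤ p ∧ y ^ 2 ≤ p := by
  have := Fact.mk hp
  obtain ⟨U, V, hUV⟩ := conic_root p hp hp5
  have h2 : (2 : ZMod p) ≠ 0 := by exact_mod_cast natCast_ne p hp5 2 (by norm_num) (by norm_num)
  have hk0 : (k : ZMod p) ≠ 0 := by rwa [Ne, ZMod.natCast_eq_zero_iff]
  have hroot' : ∀ a : ZMod p, 3 * a ^ 2 + 1 ≠ 0 := by
    intro a ha
    apply hroot (a.val : ℤ)
    rw [← ZMod.intCast_zmod_eq_zero_iff_dvd]
    push_cast
    rw [ZMod.natCast_zmod_val]; exact ha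
  -- the initial direction
  obtain ⟨u, hu⟩ : ∃ u, u = (U - V) / 2 := ⟨_, rfl⟩
  obtain ⟨w, hw⟩ : ∃ w, w = (V - u) / k := ⟨_, rfl⟩
  have e1 : U = 2 * u + V := by rw [hu]; field_simp; ring
  have e2 : V = u + k * w := by rw [hw]; field_simp; ring
  have h4 : (4 : ZMod p) ≠ 0 := by exact_mod_cast natCast_ne p hp5 4 (by norm_num) (by norm_num)
  have hN : 3 * (u ^ 2 + u * V + V ^ 2) + 1 = 0 := by
    have : 4 * (3 * (u ^ 2 + u * V + V ^ 2) + 1) = 0 := by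
      rw [e1] at hUV; linear_combination hUV
    exact (mul_eq_zero.mp this).resolve_left h4
  have hu0 : u ≠ 0 := by
    intro h
    rw [h] at hN
    exact hroot' V (by linear_combination hN)
  obtain ⟨t, ht⟩ : ∃ t : ℕ, (t : ZMod p) = w / u := ⟨(w / u).val, ZMod.natCast_zmod_val _⟩
  obtain ⟨Q, hQ⟩ : ∃ Q, Q = Nat.sqrt p := ⟨_, rfl⟩
  have hQ0 : 0 < Q := by rw [hQ, Nat.sqrt_pos]; omega
  have hQ1 : Q * Q ≤ p := by rw [hQ]; exact Nat.sqrt_le p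
  have hQ2 : p < (Q + 1) * (Q + 1) := by rw [hQ]; exact Nat.lt_succ_sqrt p
  obtain ⟨j, x, hx0, hxQ, hjx⟩ := Real.exists_int_int_abs_mul_sub_le ((t : ℝ) / p) hQ0
  have hpR : (0 : ℝ) < p := by exact_mod_cast hp.pos
  obtain ⟨y, hy⟩ : ∃ y : ℤ, y = t * x - p * j := ⟨_, rfl⟩
  have hyb : |y| * (Q + 1) ≤ p := by
    have e : (x : ℝ) * ((t : ℝ) / p) - j = (y : ℝ) / p := by
      rw [hy]; push_cast; field_simp
    rw [e, abs_div, abs_of_pos hpR, div_le_div_iff₀ hpR (by positivity)] at hjx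
    have : ((|y| * (Q + 1) : ℤ) : ℝ) ≤ ((p : ℤ) : ℝ) := by push_cast; linarith
    exact_mod_cast this
  have hyQ : |y| ≤ Q := by
    by_contra hcon
    have h1 : (Q : ℤ) + 1 ≤ |y| := by omega
    have h2 : (p : ℤ) < (Q + 1) * (Q + 1) := by exact_mod_cast hQ2
    have : ((Q : ℤ) + 1) * (Q + 1) ≤ |y| * (Q + 1) := mul_le_mul_of_nonneg_right h1 (by positivity)
    linarith
  have hQ1' : (Q : ℤ) * Q ≤ p := by exact_mod_cast hQ1
  have hQp : (Q : ℤ) < p := by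
    have : 2 ≤ Q := by
      rw [hQ, Nat.le_sqrt]; omega
    have : (2 : ℤ) ≤ Q := by exact_mod_cast this
    nlinarith
  have hyc : (y : ZMod p) = w / u * x := by
    rw [hy]; push_cast; rw [ht]; simp
  have hxc : (x : ZMod p) ≠ 0 := by
    intro h
    rw [ZMod.intCast_zmod_eq_zero_iff_dvd] at h
    have := Int.le_of_dvd hx0 h
    linarith
  -- divide by the gcd
  obtain ⟨g, x', y', hg, hcop, rfl, rfl⟩ :
      ∃ g x' y' : ℤ, 0 < g ∧ IsCoprime x' y' ∧ x = x' * g ∧ y = y' * g := by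
    have hgpos : 0 < Int.gcd x y := Int.gcd_pos_of_ne_zero_left _ hx0.ne'
    obtain ⟨x', y', h1, h2, h3⟩ := Int.exists_gcd_one hgpos
    exact ⟨Int.gcd x y, x', y', by exact_mod_cast hgpos, Int.isCoprime_iff_gcd_eq_one.mpr h1, h2, h3⟩
  have hgc : (g : ZMod p) ≠ 0 := by
    intro h; apply hxc; push_cast; rw [h]; simp
  have hxc' : (x' : ZMod p) ≠ 0 := by
    intro h; apply hxc; push_cast; rw [h]; simp
  have hyc' : (y' : ZMod p) = w / u * x' := by
    push_cast at hyc
    have : (y' : ZMod p) * g = (w / u * x') * g := by rw [hyc]; ring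
    exact mul_right_cancel₀ hgc this
  obtain ⟨s, hs⟩ : ∃ s : ℕ, (s : ZMod p) = u / x' := ⟨(u / x').val, ZMod.natCast_zmod_val _⟩
  have hx'pos : 0 < x' := by
    by_contra h
    have : x' * g ≤ 0 := mul_nonpos_of_nonpos_of_nonneg (by omega) hg.le
    omega
  refine ⟨x', y', s, hcop, ?_, ?_, ?_, ?_⟩
  · rw [← ZMod.intCast_zmod_eq_zero_iff_dvd]
    unfold NF
    push_cast
    rw [hs, hyc']
    rw [e2] at hN
    rw [← hN]
    field_simp
  · have := NF_four k x' y'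
    have h1 : 0 < 4 * NF k x' y' := by
      rw [this]
      by_cases h : x' + (k : ℤ) * y' = 0
      · rw [h]; positivity
      · positivity
    linarith
  · have h1 : x' ≤ Q := by nlinarith
    nlinarith
  · have h1 : |y'| ≤ Q := by
      rw [abs_mul, abs_of_pos hg] at hyQ
      nlinarith [abs_nonneg y']
    rw [← sq_abs]
    nlinarith [abs_nonneg y']
/-- From a good vector to a collision. -/
lemma col_of_vec (m n M P : ℕ) (hm : m = M * P) (hM : 0 < M) (hP : 1400 ≤ P)
    (hcop : Nat.Coprime M P) (hn : (m : ℤ) ^ 2 ≤ 9 * (n - 1)) (x y s : ℤ) (hxy : IsCoprime x y)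
    (hs : (P : ℤ) ∣ 3 * s ^ 2 * NF ((M : ℤ) ^ 2) x y + 1)
    (hN1 : 300 ≤ NF ((M : ℤ) ^ 2) x y)
    (hN2 : 400 * NF ((M : ℤ) ^ 2) x y ≤ 3 * (((M : ℤ) ^ 2) * P) ^ 2)
    (hroot : ∀ a : ℤ, ¬ (P : ℤ) ∣ 3 * a ^ 2 + 1) : Col m n := by
  obtain ⟨h, hh⟩ : ∃ h, h = max |x| |x + (M : ℤ) ^ 2 * y| := ⟨_, rfl⟩
  obtain ⟨h1, h2⟩ := NF_size _ x y h hh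
  have h0 : 0 ≤ h := by rw [hh]; exact le_trans (abs_nonneg x) (le_max_left _ _)
  have hP' : (1400 : ℤ) ≤ P := by exact_mod_cast hP
  have hM' : (1 : ℤ) ≤ (M : ℤ) ^ 2 := by
    have : (1 : ℤ) ≤ M := by exact_mod_cast hM
    nlinarith
  have hkP : (1400 : ℤ) ≤ (M : ℤ) ^ 2 * P := by nlinarith
  have h10 : 10 ≤ h := by nlinarith
  have h10' : 10 * h ≤ (M : ℤ) ^ 2 * P := by nlinarith
  obtain ⟨a, b, ha, han, hb, hbn, hk, hd⟩ := lattice P ((M : ℤ) ^ 2) x y s n (by linarith)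
    (by linarith) hxy (IsCoprime.pow_left (Nat.isCoprime_iff_coprime.mpr hcop)) (by linarith)
    (by rw [hm] at hn; push_cast at hn; linarith) hs (hh ▸ h10) (hh ▸ h10')
  refine col_of_int m n a b ha han hb hbn ?_ ?_
  · rintro rfl
    apply hroot a
    refine (Dvd.intro_left _ (by ring : (P : ℤ) * P = P ^ 2)).trans ?_
    rw [show 3 * a ^ 2 + 1 = a ^ 2 + a * a + a ^ 2 + 1 by ring]
    exact hd
  · rw [hm]; push_cast
    rw [mul_pow]
    exact mul_dvd_mul hk hd

lemma col_two (m n M e : ℕ) (hm : m = M * 2 ^ e) (hM : M = 1 ∨ M = 3) (hP : 1400 ≤ 2 ^ e)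
    (hn : (m : ℤ) ^ 2 ≤ 9 * (n - 1)) : Col m n := by
  have he : 3 ≤ e := by
    by_contra h
    have : 2 ^ e ≤ 2 ^ 3 := Nat.pow_le_pow_right (by norm_num) (by omega)
    omega
  obtain ⟨s, -, hs⟩ := hensel 2 Nat.prime_two 1143 1143 286 0 (by norm_num) (by norm_num) e
  have hroot : ∀ a : ℤ, ¬ ((2 ^ e : ℕ) : ℤ) ∣ 3 * a ^ 2 + 1 := by
    intro a h
    have h8 : (8 : ℤ) ∣ 3 * a ^ 2 + 1 := by
      refine Dvd.dvd.trans ?_ h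
      push_cast
      exact (by norm_num : (8 : ℤ) = 2 ^ 3) ▸ pow_dvd_pow 2 he
    have : (3 * a ^ 2 + 1) % 8 = 0 := Int.emod_eq_zero_of_dvd h8
    have h7 : a % 8 = 0 ∨ a % 8 = 1 ∨ a % 8 = 2 ∨ a % 8 = 3 ∨ a % 8 = 4 ∨ a % 8 = 5 ∨ a % 8 = 6 ∨
      a % 8 = 7 := by omega
    rcases h7 with h | h | h | h | h | h | h | h <;>
      simp [pow_two, Int.add_emod, Int.mul_emod, h] at this
  have hs' : ((2 ^ e : ℕ) : ℤ) ∣ 3 * (2 * s + 1) ^ 2 * 381 + 1 := by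
    rw [show 3 * (2 * s + 1) ^ 2 * 381 + 1 = 4 * (1143 * s ^ 2 + 1143 * s + 286) by ring]
    refine Dvd.dvd.mul_left (Dvd.dvd.trans ?_ hs) _
    push_cast
    exact pow_dvd_pow 2 (by omega)
  have hP' : (1400 : ℤ) ≤ ((2 ^ e : ℕ) : ℤ) := by exact_mod_cast hP
  rcases hM with rfl | rfl
  · have e1 : NF (((1 : ℕ) : ℤ) ^ 2) 1 18 = 381 := by norm_num [NF]
    refine col_of_vec m n 1 (2 ^ e) hm (by norm_num) hP (by norm_num) hn 1 18 (2 * s + 1)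
      isCoprime_one_left ?_ ?_ ?_ hroot
    · rw [e1]; exact hs'
    · rw [e1]; norm_num
    · rw [e1, Nat.cast_one]; nlinarith
  · have e1 : NF (((3 : ℕ) : ℤ) ^ 2) 1 2 = 381 := by norm_num [NF]
    refine col_of_vec m n 3 (2 ^ e) hm (by norm_num) hP
      (Nat.Coprime.pow_right _ (by norm_num)) hn 1 2 (2 * s + 1)
      isCoprime_one_left ?_ ?_ ?_ hroot
    · rw [e1]; exact hs'
    · rw [e1]; norm_num
    · rw [e1]; push_cast at hP' ⊢; nlinarith

lemma aux300 (t : ℤ) (h : 1 ≤ t) : 300 - t ≤ ((300 : ℕ) : ℤ) := by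
  push_cast; linarith

lemma col_inert (m n M p e : ℕ) (hp : p.Prime) (hp5 : 5 ≤ p) (hm : m = M * p ^ (e + 1))
    (hM : M = 1 ∨ M = 2 ∨ M = 3) (hP : 1400 ≤ p ^ (e + 1))
    (hn : (m : ℤ) ^ 2 ≤ 9 * (n - 1)) (hroot : ∀ a : ℤ, ¬ (p : ℤ) ∣ 3 * a ^ 2 + 1) : Col m n := by
  have hpM : ¬ p ∣ M := by
    intro h
    have := Nat.le_of_dvd (by omega) h
    omega
  have hpk : ¬ p ∣ M ^ 2 := fun h => hpM (hp.dvd_of_dvd_pow h)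
  obtain ⟨x, y, s, hxy, hs, hN, hx, hy⟩ := start_vec p hp hp5 (M ^ 2) hpk hroot
  have hpP : p ≤ p ^ (e + 1) := Nat.le_self_pow (by omega) p
  obtain ⟨P, hPdef⟩ : ∃ P, P = p ^ (e + 1) := ⟨_, rfl⟩
  rw [← hPdef] at hpP hP hm
  have hpP' : (p : ℤ) ≤ P := by exact_mod_cast hpP
  have hP' : (1400 : ℤ) ≤ P := by exact_mod_cast hP
  have hPP : (1400 : ℤ) ^ 2 ≤ P ^ 2 := by nlinarith
  have hpPP : (p : ℤ) * 1400 ≤ P ^ 2 := by nlinarith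
  have hxyb : 2 * (x * y) ≤ 2 * p ∧ -(2 * p) ≤ 2 * (x * y) :=
    ⟨by nlinarith [sq_nonneg (x - y)], by nlinarith [sq_nonneg (x + y)]⟩
  have p7 : Prime (7 : ℤ) := by norm_num
  have p13 : Prime (13 : ℤ) := by norm_num
  have p61 : Prime (61 : ℤ) := by norm_num
  push_cast at hs hN
  obtain ⟨x, y, s, hxy, hs, hN1, hN2⟩ : ∃ x y s : ℤ, IsCoprime x y ∧
      (p : ℤ) ∣ 3 * s ^ 2 * NF ((M : ℤ) ^ 2) x y + 1 ∧ 300 ≤ NF ((M : ℤ) ^ 2) x y ∧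
      NF ((M : ℤ) ^ 2) x y ≤ 3 * (((M : ℤ) ^ 2) * P) ^ 2 / 400 := by
    rcases hM with rfl | rfl | rfl
    · refine rot_many p hp _ 3 7 _ p7 (by norm_num) (by norm_num) (by norm_num) ?_ ?_ 300
        x y s hxy hs hN ?_ (aux300 _ hN)
      · intro h; exact hroot 3 (h.trans (by norm_num))
      · rw [Int.le_ediv_iff_mul_le (by norm_num)]; push_cast; nlinarith
      · rw [Int.le_ediv_iff_mul_le (by norm_num)]; unfold NF; push_cast; nlinarith
    · refine rot_many p hp _ 3 13 _ p13 (by norm_num) (by norm_num) (by norm_num) ?_ ?_ 300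
        x y s hxy hs hN ?_ (aux300 _ hN)
      · intro h; exact hroot 2 (h.trans (by norm_num))
      · rw [Int.le_ediv_iff_mul_le (by norm_num)]; push_cast; nlinarith
      · rw [Int.le_ediv_iff_mul_le (by norm_num)]; unfold NF; push_cast; nlinarith
    · refine rot_many p hp _ 4 61 _ p61 (by norm_num) (by norm_num) (by norm_num) ?_ ?_ 300
        x y s hxy hs hN ?_ (aux300 _ hN)
      · intro h; exact hroot 9 (h.trans (by norm_num))
      · rw [Int.le_ediv_iff_mul_le (by norm_num)]; push_cast; nlinarith
      · rw [Int.le_ediv_iff_mul_le (by norm_num)]; unfold NF; push_cast; nlinarith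
  rw [Int.le_ediv_iff_mul_le (by norm_num)] at hN2
  have hpi := Nat.prime_iff_prime_int.mp hp
  obtain ⟨s', -, hs'⟩ := hensel p hp (3 * NF ((M : ℤ) ^ 2) x y) 0 1 s
    (by rwa [show 3 * NF ((M : ℤ) ^ 2) x y * s ^ 2 + 0 * s + 1 =
      3 * s ^ 2 * NF ((M : ℤ) ^ 2) x y + 1 by ring])
    (by
      intro h
      have h2 : (p : ℤ) ∣ 2 := by
        have := dvd_sub (hs.mul_left 2) (h.mul_left s)
        rwa [show 2 * (3 * s ^ 2 * NF ((M : ℤ) ^ 2) x y + 1) -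
          s * (2 * (3 * NF ((M : ℤ) ^ 2) x y) * s + 0) = 2 by ring] at this
      have := Int.le_of_dvd (by norm_num) h2
      omega) e
  refine col_of_vec m n M P hm (by omega) hP ?_ hn x y s' hxy ?_ hN1 (by linarith) ?_
  · rw [hPdef]; exact Nat.Coprime.pow_right _ ((Nat.Prime.coprime_iff_not_dvd hp).mpr hpM).symm
  · rw [hPdef]; push_cast
    rwa [show 3 * NF ((M : ℤ) ^ 2) x y * s' ^ 2 + 0 * s' + 1 =
      3 * s' ^ 2 * NF ((M : ℤ) ^ 2) x y + 1 by ring] at hs'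
  · intro a h
    apply hroot a
    refine Dvd.dvd.trans ?_ h
    rw [hPdef]; push_cast; exact dvd_pow_self _ (by omega)

/-- Representative of a residue class in `[1, N]`. -/
lemma repr_pos (N a : ℤ) (hN : 0 < N) : ∃ a' q : ℤ, a' = a + N * q ∧ 1 ≤ a' ∧ a' ≤ N := by
  refine ⟨(a - 1) % N + 1, -((a - 1) / N), ?_, ?_, ?_⟩
  · have := Int.emod_add_mul_ediv (a - 1) N
    linarith
  · have := Int.emod_nonneg (a - 1) hN.ne'
    linarith
  · have := Int.emod_lt_of_pos (a - 1) hN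
    linarith

lemma col_split (m n M p e : ℕ) (hp : p.Prime) (hp5 : 5 ≤ p) (hm : m = M * p ^ (e + 1))
    (hM : 0 < M) (hP : 1400 ≤ p ^ (e + 1))
    (hn : (m : ℤ) ^ 2 ≤ 9 * (n - 1)) (a0 : ℤ) (ha0 : (p : ℤ) ∣ 3 * a0 ^ 2 + 1) : Col m n := by
  obtain ⟨P, hPdef⟩ : ∃ P, P = p ^ (e + 1) := ⟨_, rfl⟩
  have hpi := Nat.prime_iff_prime_int.mp hp
  obtain ⟨d, hd⟩ : ∃ d : ℤ, d = (M : ℤ) ^ 2 * P := ⟨_, rfl⟩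
  have hpd : (p : ℤ) ∣ d := by
    rw [hd, hPdef]; push_cast
    exact Dvd.dvd.mul_left (dvd_pow_self _ (by omega)) _
  obtain ⟨a1, -, ha1⟩ := hensel p hp 3 (3 * d) (d ^ 2 + 1) a0
    (by
      rw [show 3 * a0 ^ 2 + 3 * d * a0 + (d ^ 2 + 1) = (3 * a0 ^ 2 + 1) + d * (3 * a0 + d) by ring]
      exact dvd_add ha0 (hpd.mul_right _))
    (by
      intro h
      have h1 : (p : ℤ) ∣ 2 * (3 * a0) := by
        have := dvd_sub h (hpd.mul_left 3)
        rwa [show 2 * 3 * a0 + 3 * d - 3 * d = 2 * (3 * a0) by ring] at this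
      have h2 : (p : ℤ) ∣ 2 := by
        have := dvd_sub (ha0.mul_left 2) (h1.mul_left a0)
        rwa [show 2 * (3 * a0 ^ 2 + 1) - a0 * (2 * (3 * a0)) = 2 by ring] at this
      have := Int.le_of_dvd (by norm_num) h2
      omega) e
  rw [← hPdef] at hP hm
  have hP' : (1400 : ℤ) ≤ P := by exact_mod_cast hP
  have hM' : (1 : ℤ) ≤ M := by exact_mod_cast hM
  have ha1' : (P : ℤ) ∣ 3 * a1 ^ 2 + 3 * d * a1 + (d ^ 2 + 1) := by
    rw [hPdef]; push_cast; exact ha1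
  obtain ⟨a, q, ha, hl, hu⟩ := repr_pos P a1 (by linarith)
  have hk : (1 : ℤ) ≤ (M : ℤ) ^ 2 := by nlinarith
  have hdpos : 1 ≤ d := by rw [hd]; nlinarith
  have hb : a + d ≤ n := by
    rw [hm] at hn; push_cast at hn
    have h1 : a + d ≤ P + (M : ℤ) ^ 2 * P := by linarith
    have h2 : 9 * (P + (M : ℤ) ^ 2 * P) ≤ ((M : ℤ) * P) ^ 2 := by
      have : (P : ℤ) ≤ (M : ℤ) ^ 2 * P := by nlinarith
      have h3 : 18 * ((M : ℤ) ^ 2 * P) ≤ P * ((M : ℤ) ^ 2 * P) :=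
        mul_le_mul_of_nonneg_right (by linarith) (by positivity)
      nlinarith
    linarith
  refine col_of_int m n a (a + d) hl (by linarith) (by linarith) hb (by omega) ?_
  rw [show (m : ℤ) ^ 2 = d * P by rw [hm, hd]; push_cast; ring,
    show a + d - a = d by ring]
  apply mul_dvd_mul_left
  obtain ⟨r, hr⟩ := ha1'
  exact ⟨r + q * (6 * a1 + 3 * P * q + 3 * d), by rw [ha]; linear_combination hr⟩
lemma conic_nonzero (p : ℕ) (hp : p.Prime) (hp5 : 5 ≤ p) :
    ∃ y u : ZMod p, y ≠ 0 ∧ u ≠ 0 ∧ 3 * y ^ 2 + u ^ 2 + 4 = 0 := by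
  have := Fact.mk hp
  obtain ⟨U, V, hUV⟩ := conic_root p hp hp5
  have h2 : (2 : ZMod p) ≠ 0 := by exact_mod_cast natCast_ne p hp5 2 (by norm_num) (by norm_num)
  have h3 : (3 : ZMod p) ≠ 0 := by exact_mod_cast natCast_ne p hp5 3 (by norm_num) (by norm_num)
  have h4 : (4 : ZMod p) ≠ 0 := by exact_mod_cast natCast_ne p hp5 4 (by norm_num) (by norm_num)
  by_cases hU : U = 0
  · have hV : V ≠ 0 := by rintro rfl; rw [hU] at hUV; apply h4; linear_combination hUV
    refine ⟨3 * V / 2, -3 * V / 2, by simp [h2, h3, hV], by simp [h2, h3, hV], ?_⟩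
    rw [hU] at hUV
    field_simp
    linear_combination 4 * hUV
  · by_cases hV : V = 0
    · refine ⟨U / 2, 3 * U / 2, by simp [h2, hU], by simp [h2, h3, hU], ?_⟩
      rw [hV] at hUV
      field_simp
      linear_combination 4 * hUV
    · exact ⟨U, 3 * V, hU, by simp [h3, hV], by linear_combination hUV⟩

/-- A small shift `c` for which the quadratic is solvable with nonzero derivative. -/
lemma shift_exists (M p : ℕ) (hp : p.Prime) (hp5 : 5 ≤ p) (hpM : ¬ p ∣ M) :
    ∃ c : ℕ, 1 ≤ c ∧ 2 * c ≤ p - 1 ∧ ∃ a0 : ℤ,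
      (p : ℤ) ∣ 3 * a0 ^ 2 + 3 * ((M : ℤ) ^ 2 * c) * a0 + (((M : ℤ) ^ 2 * c) ^ 2 + 1) ∧
      ¬ (p : ℤ) ∣ 2 * 3 * a0 + 3 * ((M : ℤ) ^ 2 * c) := by
  have := Fact.mk hp
  obtain ⟨y, u, hy, hu, h⟩ := conic_nonzero p hp hp5
  have h2 : (2 : ZMod p) ≠ 0 := by exact_mod_cast natCast_ne p hp5 2 (by norm_num) (by norm_num)
  have h3 : (3 : ZMod p) ≠ 0 := by exact_mod_cast natCast_ne p hp5 3 (by norm_num) (by norm_num)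
  have h4 : (4 : ZMod p) ≠ 0 := by exact_mod_cast natCast_ne p hp5 4 (by norm_num) (by norm_num)
  have hM0 : (M : ZMod p) ≠ 0 := by rwa [Ne, ZMod.natCast_eq_zero_iff]
  obtain ⟨z, hz⟩ : ∃ z : ZMod p, z = u / (M : ZMod p) ^ 2 := ⟨_, rfl⟩
  have hz0 : z ≠ 0 := by rw [hz]; exact div_ne_zero hu (pow_ne_zero 2 hM0)
  obtain ⟨c, hc⟩ : ∃ c, c = z.valMinAbs.natAbs := ⟨_, rfl⟩
  have hcz : (c : ZMod p) ^ 2 = z ^ 2 := by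
    have e1 : ((z.valMinAbs : ℤ) : ZMod p) = z := ZMod.coe_valMinAbs z
    have e2 : ((c : ℤ)) ^ 2 = z.valMinAbs ^ 2 := by rw [hc]; exact Int.natAbs_sq _
    have e3 : (((c : ℤ) ^ 2 : ℤ) : ZMod p) = ((z.valMinAbs ^ 2 : ℤ) : ZMod p) := by rw [e2]
    push_cast at e3
    exact e3
  have hcle : c ≤ p / 2 := by rw [hc]; exact ZMod.natAbs_valMinAbs_le z
  have hodd : p % 2 = 1 := (hp.eq_two_or_odd).resolve_left (by omega)
  have hc1 : 1 ≤ c := by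
    rw [Nat.one_le_iff_ne_zero]
    intro h0
    rw [h0] at hcz
    apply hz0
    simpa using hcz.symm
  have hd2 : ((M : ZMod p) ^ 2 * c) ^ 2 = u ^ 2 := by
    rw [mul_pow, hcz, hz]; field_simp
  obtain ⟨a0, ha0⟩ : ∃ a0 : ℕ, (a0 : ZMod p) = (y - (M : ZMod p) ^ 2 * c) / 2 :=
    ⟨((y - (M : ZMod p) ^ 2 * c) / 2).val, ZMod.natCast_zmod_val _⟩
  have hya : y = 2 * a0 + (M : ZMod p) ^ 2 * c := by rw [ha0]; field_simp; ring
  refine ⟨c, hc1, by omega, a0, ?_, ?_⟩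
  · rw [← ZMod.intCast_zmod_eq_zero_iff_dvd]
    push_cast
    apply mul_left_cancel₀ h4
    rw [← hd2, hya] at h
    linear_combination h
  · rw [← ZMod.intCast_zmod_eq_zero_iff_dvd]
    push_cast
    intro h'
    have : 3 * y = 0 := by rw [hya]; linear_combination h'
    exact hy ((mul_eq_zero.mp this).resolve_left h3)

lemma col_big_aux (m n M p e c : ℕ) (hp : p.Prime) (hm : m = M * p ^ (e + 1)) (hM : 0 < M)
    (hn : (m : ℤ) ^ 2 ≤ 9 * (n - 1)) (hc : 1 ≤ c) (a0 : ℤ)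
    (h0 : (p : ℤ) ∣ 3 * a0 ^ 2 + 3 * ((M : ℤ) ^ 2 * c) * a0 + (((M : ℤ) ^ 2 * c) ^ 2 + 1))
    (h1 : ¬ (p : ℤ) ∣ 2 * 3 * a0 + 3 * ((M : ℤ) ^ 2 * c))
    (hb : 9 * (p ^ (e + 1)) ^ 2 + 9 * M ^ 2 * c ≤ M ^ 2 * (p ^ (e + 1)) ^ 2) : Col m n := by
  obtain ⟨P, hPdef⟩ : ∃ P, P = p ^ (e + 1) := ⟨_, rfl⟩
  obtain ⟨d, hd⟩ : ∃ d : ℤ, d = (M : ℤ) ^ 2 * c := ⟨_, rfl⟩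
  rw [← hd] at h0 h1
  obtain ⟨a1, -, ha1⟩ := hensel p hp 3 (3 * d) (d ^ 2 + 1) a0 h0 h1 (2 * e + 1)
  have ha1' : (P : ℤ) ^ 2 ∣ 3 * a1 ^ 2 + 3 * d * a1 + (d ^ 2 + 1) := by
    rw [hPdef]; push_cast; rw [← pow_mul]
    rwa [show (e + 1) * 2 = 2 * e + 1 + 1 by ring]
  rw [← hPdef] at hm hb
  have hP0 : (0 : ℤ) < P := by rw [hPdef]; exact_mod_cast pow_pos hp.pos _
  obtain ⟨a, q, ha, hl, hu⟩ := repr_pos ((P : ℤ) ^ 2) a1 (by positivity)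
  have hM' : (1 : ℤ) ≤ M := by exact_mod_cast hM
  have hc' : (1 : ℤ) ≤ c := by exact_mod_cast hc
  have hdpos : 0 < d := by rw [hd]; positivity
  have hb' : 9 * (P : ℤ) ^ 2 + 9 * (M : ℤ) ^ 2 * c ≤ (M : ℤ) ^ 2 * (P : ℤ) ^ 2 := by exact_mod_cast hb
  have hbn : a + d ≤ n := by
    rw [hm] at hn; push_cast at hn
    nlinarith
  refine col_of_int m n a (a + d) hl (by linarith) (by linarith) hbn (by omega) ?_
  rw [show (m : ℤ) ^ 2 = (M : ℤ) ^ 2 * (P : ℤ) ^ 2 by rw [hm]; push_cast; ring,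
    show a + d - a = d by ring]
  apply mul_dvd_mul
  · rw [hd]; exact Dvd.intro _ rfl
  · obtain ⟨r, hr⟩ := ha1'
    exact ⟨r + q * (6 * a1 + 3 * (P : ℤ) ^ 2 * q + 3 * d), by rw [ha]; linear_combination hr⟩

lemma col_big (m n M p e : ℕ) (hp : p.Prime) (hp3 : p ≠ 3) (hm : m = M * p ^ (e + 1))
    (hpM : ¬ p ∣ M) (hM : 4 ≤ M) (hP2 : p ^ (e + 1) ≠ 2) (h20 : m ≠ 20) (h28 : m ≠ 28)
    (hn : (m : ℤ) ^ 2 ≤ 9 * (n - 1)) : Col m n := by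
  have hpP : p ≤ p ^ (e + 1) := Nat.le_self_pow (by omega) p
  rcases (show p = 2 ∨ 5 ≤ p by
    have := hp.two_le
    by_contra hcon
    have : p = 4 := by omega
    rw [this] at hp; exact absurd hp (by norm_num)) with rfl | hp5
  · have hM5 : 5 ≤ M := by omega
    have he : 1 ≤ e := by
      by_contra h
      have : e = 0 := by omega
      rw [this] at hP2; norm_num at hP2
    have hP4 : 4 ≤ 2 ^ (e + 1) := by
      calc 4 = 2 ^ 2 := by norm_num
        _ ≤ _ := Nat.pow_le_pow_right (by norm_num) (by omega)
    have hodd : Odd ((M : ℤ)) := by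
      rw [Int.odd_iff]; omega
    refine col_big_aux m n M 2 e 1 hp hm (by omega) hn le_rfl 1 ?_ ?_ ?_
    · obtain ⟨t, ht⟩ := hodd
      rw [ht]
      exact ⟨4 + 5 * (2 * t ^ 2 + 2 * t) + 2 * (2 * t ^ 2 + 2 * t) ^ 2, by push_cast; ring⟩
    · obtain ⟨t, ht⟩ := hodd
      rw [ht, show 2 * 3 * 1 + 3 * ((2 * t + 1) ^ 2 * ((1 : ℕ) : ℤ)) =
        2 * (4 + 3 * (2 * t ^ 2 + 2 * t)) + 1 by push_cast; ring]
      push_cast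
      omega
    · generalize 2 ^ (e + 1) = P at hP4
      nlinarith [Nat.mul_le_mul hM5 hM5, Nat.mul_le_mul hP4 hP4]
  · obtain ⟨c, hc1, hc2, a0, h0, h1⟩ := shift_exists M p hp hp5 hpM
    refine col_big_aux m n M p e c hp hm (by omega) hn hc1 a0 h0 h1 ?_
    have h7 : p = 5 ∨ 7 ≤ p := by
      by_contra hcon
      have : p = 6 := by omega
      rw [this] at hp; exact absurd hp (by norm_num)
    rcases (show M = 4 ∨ 5 ≤ M by omega) with rfl | hM5
    · have hP11 : 11 ≤ p ^ (e + 1) := by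
        by_contra hcon
        have he : e = 0 := by
          by_contra he
          have h25 : p ^ 2 ≤ p ^ (e + 1) := Nat.pow_le_pow_right hp.pos (by omega)
          nlinarith
        subst he
        simp only [zero_add, pow_one] at hm hcon
        have hp10 : p ≤ 10 := by omega
        interval_cases p
        · omega
        · revert hp; norm_num
        · omega
        · revert hp; norm_num
        · revert hp; norm_num
        · revert hp; norm_num
      generalize p ^ (e + 1) = P at *
      have hpp : p - 1 ≤ P := by omega
      nlinarith
    · rcases h7 with rfl | h7
      · have hM6 : 6 ≤ M := by
          by_contra h
          have : M = 5 := by omega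
          rw [this] at hpM; exact hpM (dvd_refl 5)
        have hc : c ≤ 2 := by omega
        generalize 5 ^ (e + 1) = P at *
        have h1 : 36 ≤ M ^ 2 := by nlinarith
        have h2 : 25 ≤ P ^ 2 := by nlinarith
        have h3 : M ^ 2 * c ≤ M ^ 2 * 2 := Nat.mul_le_mul_left _ hc
        nlinarith
      · generalize p ^ (e + 1) = P at *
        have h1 : 25 ≤ M ^ 2 := by nlinarith
        have h2 : p * P ≤ P ^ 2 := by nlinarith
        obtain ⟨r, hr⟩ : ∃ r, p = r + 1 := ⟨p - 1, by omega⟩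
        have h4 : 225 * r ≤ 32 * P ^ 2 := by nlinarith
        have h5 : 2 * c ≤ r := by omega
        have h6 : 225 * (2 * c) ≤ 32 * P ^ 2 := by omega
        have h8 : M ^ 2 * (225 * (2 * c)) ≤ M ^ 2 * (32 * P ^ 2) := Nat.mul_le_mul_left _ h6
        have h9 : 25 * P ^ 2 ≤ M ^ 2 * P ^ 2 := Nat.mul_le_mul_right _ h1
        nlinarith
lemma beq_iff_aux (a b : ℕ) : (Nat.beq a b = true) ↔ a = b :=
  ⟨Nat.eq_of_beq_eq_true, fun h => h ▸ Nat.beq_refl a⟩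

/-- Collisions `(m, a, b)` for the finitely many small moduli. -/
def tbl : List (ℕ × ℕ × ℕ) :=
  [
   (4,1,5), (5,3,5), (7,3,8), (8,1,5), (10,3,5), (11,1,15),
   (12,1,10), (13,8,13), (14,3,10), (15,7,25), (16,11,15), (17,8,19),
   (19,15,16), (20,10,13), (21,8,17), (22,1,15), (23,13,24), (24,17,26),
   (25,8,20), (26,2,15), (28,10,17), (29,37,57), (31,38,42), (32,11,15),
   (33,5,32), (34,21,34), (37,7,44), (38,14,29), (39,60,78), (41,15,49),
   (43,10,53), (46,34,41), (47,16,57), (48,1,37), (49,10,31), (50,8,20),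
   (51,26,44), (53,28,102), (57,7,34), (58,37,57), (59,41,55), (61,40,59),
   (62,38,42), (64,51,71), (67,25,92), (69,29,74), (71,72,110), (73,36,48),
   (74,35,50), (75,75,93), (79,64,65), (82,15,49), (83,130,141), (86,10,53),
   (87,7,88), (89,64,81), (93,24,204), (94,13,59), (96,27,63), (97,16,88),
   (98,10,31), (101,163,205), (103,77,91), (106,75,117), (107,39,128), (109,65,111),
   (111,63,72), (113,71,112), (118,41,55), (121,126,153), (122,9,70), (123,246,255),
   (125,83,120), (127,48,96), (128,102,107), (129,25,214), (131,75,136), (134,70,102),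
   (137,96,127), (139,18,157), (141,118,208), (142,98,133), (146,36,48), (147,88,214),
   (149,80,159), (151,20,140), (157,64,183), (158,19,101), (159,139,148), (163,96,167),
   (166,130,141), (167,119,153), (169,67,132), (173,279,286), (177,152,188), (178,55,89),
   (179,64,215), (181,28,209), (183,332,431), (191,135,176), (192,13,121), (193,8,201),
   (194,16,88), (197,77,232), (199,111,209), (201,256,346), (202,163,205), (206,77,91),
   (211,155,189), (213,87,168), (214,159,190), (218,65,111), (219,201,363), (223,104,152),
   (226,179,190), (227,350,391), (229,96,265), (233,144,233), (237,250,304), (239,258,509),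
   (241,70,311), (242,126,153), (249,293,356), (250,158,247), (251,21,344), (254,48,96),
   (256,13,121), (257,335,499), (262,110,222), (263,197,232), (267,272,650), (269,502,616),
   (271,179,261), (274,155,286), (277,177,272), (278,18,157), (281,176,279), (283,169,288),
   (289,189,280), (291,16,88), (293,127,336), (298,11,205), (302,20,140), (303,152,215),
   (307,114,421), (309,297,450), (311,71,400), (313,124,232), (314,113,270), (317,163,344),
   (321,289,631), (326,39,202), (327,56,362), (331,21,352), (334,119,153), (337,422,448),
   (338,106,262), (339,449,872), (343,53,151), (346,279,286), (347,435,1025), (349,151,500),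
   (353,232,341), (358,226,502), (359,362,558), (361,43,347), (362,121,286), (363,126,153),
   (367,253,344), (373,227,376), (375,242,278), (379,209,400), (381,71,557), (382,21,259),
   (383,232,387), (384,13,121), (386,279,350), (389,209,415), (393,509,581), (394,42,418),
   (397,307,341), (398,111,209), (401,249,400), (409,120,509), (411,577,847), (417,130,931),
   (419,189,475), (421,154,575), (422,155,189), (431,296,405), (433,344,363), (439,32,471),
   (443,728,887), (446,104,152), (447,412,448), (449,448,702), (453,194,806), (454,350,391),
   (457,208,316), (458,45,299), (461,309,440), (463,140,603), (466,262,338), (467,272,481),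
   (471,318,795), (478,258,509), (479,522,710), (482,70,311), (487,36,468), (489,748,982),
   (491,739,863), (499,320,489), (501,234,450), (502,58,530), (503,1123,1588), (507,210,327),
   (509,400,431), (512,282,309), (514,335,499), (519,562,652), (521,127,1406), (523,363,488),
   (526,239,595), (529,592,770), (537,580,1282), (538,277,839), (541,94,635), (542,179,261),
   (543,418,877), (547,27,574), (554,170,447), (557,700,738), (562,881,954), (563,307,597),
   (566,163,293), (569,449,480), (571,73,644), (573,245,443), (577,50,627), (578,15,401),
   (579,477,567), (586,748,940), (587,379,573), (591,371,1280), (593,461,507), (597,149,302),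
   (599,344,621), (601,220,460), (607,437,552), (613,670,745), (614,114,421), (617,167,777),
   (619,38,657), (622,62,847), (625,693,750), (626,124,232), (631,29,660), (633,651,1641),
   (634,71,859), (641,216,779), (643,96,739), (647,798,872), (653,740,942), (659,216,805),
   (661,405,664), (662,482,597), (669,994,1957), (673,352,424), (674,198,535), (677,870,878),
   (681,40,697), (683,1066,1750), (686,53,151), (687,957,1056), (691,441,679), (694,435,1025),
   (698,198,547), (699,476,494), (701,169,896), (706,34,981), (709,321,1030), (717,444,831),
   (718,362,558), (719,456,709), (722,43,347), (723,127,1207), (727,352,484), (733,512,681),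
   (734,178,545), (739,938,970), (743,27,1037), (746,53,499), (751,202,953), (753,116,1115),
   (757,234,991), (758,287,666), (761,549,691), (766,177,431), (768,13,121), (769,16,785),
   (771,487,694), (773,1360,1846), (778,209,415), (787,825,990), (789,477,729), (794,307,341),
   (797,209,1008), (802,1274,1345), (807,182,866), (809,742,1320), (811,87,898), (813,71,503),
   (818,411,531), (821,571,765), (823,158,981), (827,13,1163), (829,379,936), (831,325,667),
   (838,189,475), (839,405,931), (841,616,755), (842,154,575), (843,472,553), (849,1909,2440),
   (853,147,1000), (857,363,989), (859,640,761), (862,71,1182), (863,403,968), (866,611,799),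
   (867,833,2291), (877,699,733), (878,593,834), (879,513,1044), (881,1008,1262), (883,225,1108),
   (886,1269,1339), (887,872,1398), (898,207,1305), (907,46,953), (911,1150,1202), (914,208,316),
   (919,645,851), (921,169,1348), (922,231,505), (926,450,615), (929,1150,1248), (933,1589,1778),
   (934,227,517), (937,384,684), (939,124,232), (941,344,1125), (947,348,1922), (951,839,1604),
   (953,441,1072), (958,522,710), (961,420,916), (967,95,1062), (971,664,915), (974,36,468),
   (977,573,1003), (982,739,863), (983,1250,1288), (991,505,1079), (993,46,1990), (997,203,1200),
   (998,498,651), (1006,226,1690), (1009,741,904), (1011,195,555), (1013,618,1892), (1018,271,545),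
   (1019,825,839), (1021,435,1456), (1024,201,381), (1029,878,1319), (1031,565,1091), (1033,214,1247),
   (1039,545,1119), (1041,281,1226), (1042,127,1406), (1046,249,583), (1047,998,1133), (1049,1703,1723),
   (1051,230,1281), (1058,1160,1356), (1059,314,1691), (1061,522,2068), (1063,721,1007), (1069,760,981),
   (1077,719,1205), (1082,94,635), (1083,338,491), (1087,747,1021), (1091,1150,1652), (1093,101,1194),
   (1094,27,574), (1097,863,928), (1101,1269,1773), (1103,677,1107), (1109,736,1065), (1114,889,930),
   (1117,792,1027), (1119,570,966), (1123,397,1352), (1126,307,597), (1129,661,1160), (1137,128,1298),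
   (1138,115,741), (1142,561,753), (1149,1823,1877), (1151,824,1051), (1153,384,912), (1154,50,627),
   (1163,853,1043), (1167,900,1332), (1171,896,1015), (1174,379,573), (1181,861,1064), (1186,461,507),
   (1187,881,2829), (1191,804,2199), (1193,1502,1578), (1198,210,1222), (1201,20,1221), (1202,220,460),
   (1203,516,1569), (1213,145,1358), (1214,62,669), (1217,853,1128), (1223,597,1352), (1226,670,745),
   (1227,84,1875), (1229,629,1336), (1231,944,1065), (1234,167,777), (1237,913,1104), (1238,38,657),
   (1249,400,1000), (1250,693,750), (1257,685,1225), (1259,2549,2887), (1262,706,751), (1263,682,1807),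
   (1277,1190,2068), (1279,90,1369), (1282,1007,1086), (1283,978,2252), (1286,462,1150), (1289,1458,1862),
   (1291,231,1522), (1293,265,1876), (1294,855,1246), (1297,621,1918), (1299,1393,1762), (1301,469,1560),
   (1303,716,788), (1306,1354,1657), (1307,783,1328), (1317,1414,1666), (1318,889,1253), (1319,770,2488),
   (1321,741,1384), (1322,537,969), (1327,848,1303), (1329,3003,3462), (1331,995,1176), (1346,352,424),
   (1347,207,1305), (1354,870,878), (1361,376,1709), (1366,1066,1750), (1367,2037,2928), (1369,340,710),
   (1371,208,316), (1373,624,1553), (1381,1104,1151), (1382,441,679), (1383,1732,2776), (1389,1988,2186),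
   (1399,904,1365), (1401,1071,2493), (1402,907,1367), (1418,321,1030), (1437,2270,3233), (1438,311,825),
   (1454,352,484), (1461,36,468), (1466,267,877), (1473,352,2260), (1478,938,970), (1486,27,1037),
   (1497,498,651), (1502,202,953), (1509,857,1811), (1514,234,991), (1522,549,691), (1527,1691,1736),
   (1536,282,309), (1538,753,1522), (1546,2394,2653), (1563,572,1526), (1569,432,1395), (1574,825,990),
   (1587,248,1535), (1594,1121,1474), (1618,1125,1803), (1622,87,898), (1623,1689,3831), (1641,647,1313),
   (1642,571,765), (1646,158,981), (1654,13,1163), (1658,797,1109), (1671,600,1383), (1678,405,931),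
   (1682,209,1071), (1689,1077,1932), (1706,770,1402), (1707,488,1505), (1713,2674,3493), (1714,363,989),
   (1718,399,1258), (1726,1526,2054), (1731,375,1608), (1754,699,733), (1761,1121,2390), (1762,633,2415),
   (1766,658,1541), (1774,1259,1630), (1779,1762,2545), (1797,996,1482), (1803,40,580), (1814,46,953),
   (1821,3222,3240), (1822,1150,1202), (1838,645,851), (1839,290,1055), (1851,1366,1483), (1857,2016,2151),
   (1858,1057,2263), (1874,384,684), (1875,3367,3403), (1882,337,2477), (1893,706,751), (1894,2181,2193),
   (1906,1214,1875), (1922,420,916), (1923,941,2822), (1929,2114,3203), (1934,95,1062), (1941,1131,2715),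
   (1942,369,1151), (1954,573,1003), (1959,1301,1706), (1966,998,1522), (1977,888,2760), (1982,505,1079),
   (1983,537,969), (1994,794,1791), (2018,883,1426), (2019,352,424), (2026,158,2182), (2031,906,4776),
   (2038,825,839), (2042,586,1607), (2049,1066,1750), (2062,565,1091), (2066,214,1247), (2073,2731,3631),
   (2078,545,1119), (2098,1703,1723), (2102,230,1281), (2103,1719,2538), (2122,3047,4461), (2126,721,1007),
   (2127,2679,6207), (2138,375,1289), (2157,1272,1353), (2174,747,1021), (2181,1849,3739), (2182,3358,3426),
   (2186,101,1194), (2194,414,2875), (2199,3053,4007), (2206,677,1107), (2217,1272,1425), (2218,2783,3959),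
   (2229,2631,3864), (2234,825,1942), (2246,771,1894), (2253,2617,5362), (2258,118,1247), (2271,585,3681),
   (2283,564,2418), (2302,671,1185), (2306,384,912), (2307,3758,4559), (2319,1360,1846), (2326,853,1043),
   (2342,110,1281), (2361,1839,5754), (2362,159,1585), (2374,881,2829), (2386,1502,1578), (2391,2220,5982),
   (2402,1181,2382), (2426,145,1358), (2427,123,4218), (2433,2346,2607), (2434,1105,2754), (2446,1455,2494),
   (2458,1182,2731), (2462,326,1557), (2463,2352,2388), (2469,2657,4142), (2474,179,1653), (2481,1594,1846),
   (2487,418,2758), (2498,400,1000), (2517,1529,3473), (2518,2549,2887), (2523,1277,4139), (2554,2590,3957),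
   (2558,90,1369), (2559,1120,1957), (2566,1021,3009), (2571,1088,1997), (2577,672,2706), (2578,1458,1862),
   (2582,231,1522), (2589,70,3076), (2594,621,1918), (2602,2107,2142), (2606,716,788), (2614,661,1427),
   (2631,256,6718), (2638,2585,3485), (2642,242,1563), (2643,633,2415), (2649,3038,3407), (2654,674,2001),
   (2661,1654,2419), (2662,1822,2507), (2721,4764,7230), (2722,1013,3707), (2733,728,2447), (2734,2314,3346),
   (2738,215,1473), (2746,1262,2238), (2757,1298,2468), (2762,349,1755), (2787,1057,2263), (2798,206,1605),
   (2811,5934,8544), (2823,2120,3272), (2841,1961,3734), (2859,814,2956), (2883,1691,2528), (2901,1083,5502),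
   (2913,2139,3723), (2931,450,3276), (2949,1598,5018), (2973,1148,2858), (2991,3915,6759), (3027,274,1867),
   (3039,2134,2539), (3057,1695,2955), (3063,3530,5600), (3072,201,381), (3093,1278,5787), (3099,4847,5936),
   (3117,3736,7840), (3147,2231,4688), (3153,767,2873), (3183,5348,5942), (3189,633,3000), (3207,1192,2623),
   (3261,534,10317), (3273,1663,4759), (3279,5046,8187), (3291,1752,5622), (3309,4274,5642), (3327,2486,5150),
   (3351,2149,3823), (3369,2545,4246), (3387,1923,5982), (3453,278,4004), (3459,89,5363), (3489,1999,4906),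
   (3513,4757,5531), (3543,2265,3165), (3561,1305,5526), (3579,2326,3163), (3603,6083,9251), (3639,4106,4412),
   (3651,239,8132), (3669,2497,6178), (3687,3144,7383), (3693,1768,2695), (3711,6361,10492), (3747,3263,4343),
   (3777,2635,4129), (3831,4264,6865), (3837,5781,6033), (3849,6034,7825), (3867,337,6646), (3873,1062,4032),
   (3891,2769,5046), (3903,4233,5250), (3909,716,788), (3921,1848,5412), (3957,2585,3485), (3963,4070,5186),
   (3981,6383,6437), (3993,4696,6937), (4083,421,6982), (4101,2037,2928), (4107,2732,2966), (4119,3094,3247),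
   (4143,435,6249), (4197,5239,6391)]

/-- `9 ^ j + 1` for the largest `j ≤ 7` with `3 ^ j ≤ m`. -/
def bnd (m : ℕ) : ℕ :=
  bif Nat.ble 2187 m then 9 ^ 7 + 1 else bif Nat.ble 729 m then 9 ^ 6 + 1 else
  bif Nat.ble 243 m then 9 ^ 5 + 1 else bif Nat.ble 81 m then 9 ^ 4 + 1 else
  bif Nat.ble 27 m then 9 ^ 3 + 1 else bif Nat.ble 9 m then 9 ^ 2 + 1 else
  bif Nat.ble 3 m then 9 + 1 else 2

def okEntry (m : ℕ) (e : ℕ × ℕ × ℕ) : Bool :=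
  Nat.beq e.1 m && (Nat.ble 1 e.2.1 && (Nat.blt e.2.1 e.2.2 && (Nat.ble e.2.2 (bnd m) &&
    Nat.beq ((e.2.2 ^ 3 + e.2.2) % m ^ 2) ((e.2.1 ^ 3 + e.2.1) % m ^ 2))))

def inTbl (m : ℕ) : Bool := tbl.any (okEntry m)

def notPP (P : ℕ) : Bool :=
  (List.range 40).any fun d => Nat.ble 2 d && (Nat.beq (P % d) 0 && (Nat.beq (Nat.gcd d (P / d)) 1
    && Nat.ble 2 (P / d)))

def covered (P : ℕ) : Bool :=
  Nat.beq (P % 3) 0 || (notPP P || (inTbl P && ((inTbl (2 * P) || Nat.beq (P % 2) 0) && inTbl (3 * P))))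

lemma covered_all : ((List.range 1396).all fun i => covered (i + 4)) = true := by
  decide +kernel

lemma special_ok : (inTbl 20 && inTbl 28) = true := by
  decide +kernel

lemma bnd_le (m j : ℕ) (h2 : m < 3 ^ (j + 1)) : bnd m ≤ 9 ^ j + 1 := by
  have key : ∀ i : ℕ, 3 ^ i ≤ m → 9 ^ i + 1 ≤ 9 ^ j + 1 := by
    intro i hi
    have : i < j + 1 := (Nat.pow_lt_pow_iff_right (by norm_num : 1 < 3)).mp (lt_of_le_of_lt hi h2)
    have := Nat.pow_le_pow_right (show 0 < 9 by norm_num) (show i ≤ j by omega)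
    omega
  unfold bnd
  simp only [Bool.cond_eq_ite, Nat.ble_eq]
  split_ifs with h7 h6 h5 h4 h3 h2 h1
  · exact key 7 (by norm_num; exact h7)
  · exact key 6 (by norm_num; exact h6)
  · exact key 5 (by norm_num; exact h5)
  · exact key 4 (by norm_num; exact h4)
  · exact key 3 (by norm_num; exact h3)
  · exact key 2 (by norm_num; exact h2)
  · exact key 1 (by norm_num; exact h1)
  · have : 0 < 9 ^ j := by positivity
    omega

lemma col_tbl (m j : ℕ) (h2 : m < 3 ^ (j + 1)) (h : inTbl m = true) : Col m (9 ^ j + 1) := by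
  unfold inTbl at h
  rw [List.any_eq_true] at h
  obtain ⟨⟨m', a, b⟩, -, h⟩ := h
  unfold okEntry at h
  simp only [Bool.and_eq_true, Nat.ble_eq, beq_iff_aux, Nat.blt_eq] at h
  obtain ⟨-, h3, h4, h5, h6⟩ := h
  exact ⟨a, b, h3, h4, h5.trans (bnd_le m j h2), h6⟩

lemma notPP_false (p e : ℕ) (hp : p.Prime) : notPP (p ^ (e + 1)) = false := by
  by_contra h
  rw [Bool.not_eq_false] at h
  unfold notPP at h
  rw [List.any_eq_true] at h
  obtain ⟨d, -, h⟩ := h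
  simp only [Bool.and_eq_true, Nat.ble_eq, beq_iff_aux] at h
  obtain ⟨h1, h2, h3, h4⟩ := h
  have hd : d ∣ p ^ (e + 1) := Nat.dvd_of_mod_eq_zero h2
  obtain ⟨q, hq⟩ := hd
  have hqd : p ^ (e + 1) / d = q := by rw [hq]; exact Nat.mul_div_cancel_left _ (by omega)
  rw [hqd] at h3 h4
  have p1 : p ∣ d := by
    obtain ⟨i, -, hi⟩ := (Nat.dvd_prime_pow hp).mp (Dvd.intro _ hq.symm)
    rw [hi]
    apply dvd_pow_self
    rintro rfl
    simp at hi; omega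
  have p2 : p ∣ q := by
    obtain ⟨i, -, hi⟩ := (Nat.dvd_prime_pow hp).mp (Dvd.intro_left _ hq.symm)
    rw [hi]
    apply dvd_pow_self
    rintro rfl
    simp at hi; omega
  have := Nat.dvd_gcd p1 p2
  rw [h3] at this
  exact hp.one_lt.ne' (Nat.dvd_one.mp this)

lemma col_small (m j M p e : ℕ) (hp : p.Prime) (hp3 : p ≠ 3) (hm : m = M * p ^ (e + 1))
    (hpM : ¬ p ∣ M) (hM : M = 1 ∨ M = 2 ∨ M = 3) (hP2 : p ^ (e + 1) ≠ 2)
    (hP : p ^ (e + 1) < 1400) (h2 : m < 3 ^ (j + 1)) : Col m (9 ^ j + 1) := by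
  have h3 : ¬ 3 ∣ p ^ (e + 1) := fun h => hp3
    ((Nat.prime_dvd_prime_iff_eq Nat.prime_three hp).mp (Nat.prime_three.dvd_of_dvd_pow h)).symm
  have hpP : p ≤ p ^ (e + 1) := Nat.le_self_pow (by omega) p
  have hnp := notPP_false p e hp
  have hev : M = 2 → p ^ (e + 1) % 2 ≠ 0 := by
    rintro rfl h
    have := Nat.prime_two.dvd_of_dvd_pow (Nat.dvd_of_mod_eq_zero h)
    rw [Nat.prime_dvd_prime_iff_eq Nat.prime_two hp] at this
    exact hpM (this ▸ dvd_refl 2)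
  have h2p := hp.two_le
  generalize p ^ (e + 1) = P at *
  have hP4 : 4 ≤ P := by omega
  have hc : covered P = true := by
    have := covered_all
    rw [List.all_eq_true] at this
    have := this (P - 4) (List.mem_range.mpr (by omega))
    rwa [Nat.sub_add_cancel hP4] at this
  unfold covered at hc
  simp only [Bool.or_eq_true, Bool.and_eq_true, beq_iff_aux, hnp] at hc
  rcases hc with hc | hc | ⟨c1, c2, c3⟩
  · exact absurd (Nat.dvd_of_mod_eq_zero hc) h3
  · simp at hc
  · apply col_tbl m j h2
    rcases hM with rfl | rfl | rfl
    · rw [hm, one_mul]; exact c1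
    · rw [hm]; exact c2.resolve_right (hev rfl)
    · rw [hm]; exact c3

lemma decompose (m j : ℕ) (h1 : 3 ^ j < m) (h2 : m < 3 ^ (j + 1)) (hne : m ≠ 2 * 3 ^ j) :
    ∃ M p e : ℕ, p.Prime ∧ p ≠ 3 ∧ m = M * p ^ (e + 1) ∧ ¬ p ∣ M ∧ p ^ (e + 1) ≠ 2 := by
  have hm0 : m ≠ 0 := by omega
  have fac : ∀ p : ℕ, p.Prime → p ∣ m → ∃ M e : ℕ, m = M * p ^ (e + 1) ∧ ¬ p ∣ M := by
    intro p hp hd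
    obtain ⟨i, M, hM, hi⟩ := Nat.exists_eq_pow_mul_and_not_dvd hm0 p hp.ne_one
    cases i with
    | zero => rw [pow_zero, one_mul] at hi; rw [hi] at hd; exact absurd hd hM
    | succ e => exact ⟨M, e, by rw [hi]; ring, hM⟩
  by_cases hex : ∃ p, p.Prime ∧ p ∣ m ∧ p ≠ 3 ∧ p ≠ 2
  · obtain ⟨p, hp, hd, hp3, hp2⟩ := hex
    obtain ⟨M, e, h, hM⟩ := fac p hp hd
    refine ⟨M, p, e, hp, hp3, h, hM, ?_⟩
    intro h'
    apply hp2
    have : p ∣ 2 := h' ▸ dvd_pow_self p (by omega)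
    exact (Nat.prime_dvd_prime_iff_eq hp Nat.prime_two).mp this
  · push Not at hex
    obtain ⟨s, q, hq, hs⟩ := Nat.exists_eq_pow_mul_and_not_dvd hm0 3 (by norm_num)
    have hq0 : q ≠ 0 := by rintro rfl; simp at hq
    have hq2 : q = 2 ^ q.primeFactorsList.length := by
      apply Nat.eq_prime_pow_of_unique_prime_dvd hq0
      intro d hd hdq
      by_contra hd2
      apply hd2
      apply hex d hd (hs ▸ Dvd.dvd.mul_left hdq _)
      rintro rfl
      exact hq hdq
    generalize q.primeFactorsList.length = i at hq2
    have hsj : s ≤ j := by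
      have : 3 ^ s < 3 ^ (j + 1) := by
        refine lt_of_le_of_lt ?_ h2
        rw [hs]; exact Nat.le_mul_of_pos_right _ (by omega)
      have := (Nat.pow_lt_pow_iff_right (by norm_num : 1 < 3)).mp this
      omega
    have hle := Nat.pow_le_pow_right (show 0 < 3 by norm_num) hsj
    have hi2 : 2 ≤ i := by
      by_contra hcon
      have : i = 0 ∨ i = 1 := by omega
      rcases this with rfl | rfl
      · rw [hq2, pow_zero, mul_one] at hs; omega
      · rw [hq2, pow_one] at hs
        have : 3 ^ j < 3 ^ (s + 1) := by rw [pow_succ]; omega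
        have := (Nat.pow_lt_pow_iff_right (by norm_num : 1 < 3)).mp this
        have : s = j := by omega
        subst this; omega
    obtain ⟨e, rfl⟩ : ∃ e, i = e + 1 := ⟨i - 1, by omega⟩
    refine ⟨3 ^ s, 2, e, Nat.prime_two, by norm_num, by rw [hs, hq2], ?_, ?_⟩
    · intro h
      have := Nat.prime_two.dvd_of_dvd_pow h
      omega
    · have := Nat.pow_le_pow_right (show 0 < 2 by norm_num) hi2
      omega

lemma col_two_three (j : ℕ) : Col (2 * 3 ^ j) (9 ^ j + 1) := by
  have hpos : 0 < 9 ^ j := by positivity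
  refine ⟨1, 9 ^ j + 1, le_rfl, by omega, le_rfl, ?_⟩
  apply Nat.ModEq.symm
  rw [Nat.modEq_iff_dvd]
  obtain ⟨t, ht⟩ : ∃ t : ℤ, (9 : ℤ) ^ j = 4 * t + 1 := by
    have h : (4 : ℤ) ∣ 9 ^ j - 1 := by
      refine Dvd.dvd.trans (by norm_num : (4 : ℤ) ∣ 9 - 1) ?_
      simpa using sub_dvd_pow_sub_pow (9 : ℤ) 1 j
    obtain ⟨t, ht⟩ := h
    exact ⟨t, by linarith⟩
  refine ⟨4 * t ^ 2 + 5 * t + 2, ?_⟩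
  have e : (((2 * 3 ^ j) ^ 2 : ℕ) : ℤ) = 4 * 9 ^ j := by
    push_cast
    rw [mul_pow, ← pow_mul, mul_comm j 2, pow_mul]; norm_num
  rw [e]
  push_cast
  rw [ht]
  ring

theorem col_main (m j : ℕ) (h1 : 3 ^ j < m) (h2 : m < 3 ^ (j + 1)) : Col m (9 ^ j + 1) := by
  by_cases hne : m = 2 * 3 ^ j
  · rw [hne]; exact col_two_three j
  obtain ⟨M, p, e, hp, hp3, hm, hpM, hP2⟩ := decompose m j h1 h2 hne
  have hn : (m : ℤ) ^ 2 ≤ 9 * (((9 ^ j + 1 : ℕ) : ℤ) - 1) := by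
    have : m ^ 2 ≤ 9 * 9 ^ j := by
      calc m ^ 2 ≤ (3 ^ (j + 1)) ^ 2 := Nat.pow_le_pow_left h2.le 2
        _ = 9 * 9 ^ j := by rw [← pow_mul, mul_comm (j + 1) 2, pow_mul, pow_succ]; ring
    push_cast
    have h' : (m : ℤ) ^ 2 ≤ 9 * 9 ^ j := by exact_mod_cast this
    linarith
  have hM0 : 0 < M := by
    rcases Nat.eq_zero_or_pos M with rfl | h
    · simp at hpM
    · exact h
  rcases (show 4 ≤ M ∨ (M = 1 ∨ M = 2 ∨ M = 3) by omega) with hM | hM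
  · by_cases h20 : m = 20
    · refine col_tbl m j h2 ?_
      have := special_ok
      rw [Bool.and_eq_true] at this
      rw [h20]; exact this.1
    by_cases h28 : m = 28
    · refine col_tbl m j h2 ?_
      have := special_ok
      rw [Bool.and_eq_true] at this
      rw [h28]; exact this.2
    exact col_big m _ M p e hp hp3 hm hpM hM hP2 h20 h28 hn
  · rcases lt_or_ge (p ^ (e + 1)) 1400 with hP | hP
    · exact col_small m j M p e hp hp3 hm hpM hM hP2 hP h2
    · rcases (show p = 2 ∨ 5 ≤ p by
        have := hp.two_le
        by_contra hcon
        have : p = 4 := by omega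
        rw [this] at hp; exact absurd hp (by norm_num)) with rfl | hp5
      · refine col_two m _ M (e + 1) hm ?_ hP hn
        rcases hM with h | h | h
        · exact Or.inl h
        · rw [h] at hpM; exact absurd (dvd_refl 2) hpM
        · exact Or.inr h
      · by_cases hroot : ∃ a : ℤ, (p : ℤ) ∣ 3 * a ^ 2 + 1
        · obtain ⟨a, ha⟩ := hroot
          exact col_split m _ M p e hp hp5 hm hM0 hP hn a ha
        · push Not at hroot
          exact col_inert m _ M p e hp hp5 hm hM hP hn hroot

/-- Let `n ≥ 2`, let `k` be the least positive integer `j` with `3^j ≥ √n`, and let `m` be a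
positive integer with `√n < m < 3^k`.  Then there exist `1 ≤ a < b ≤ n` with
`b³ + b ≡ a³ + a (mod m²)`. -/
theorem collision_exists (n : ℕ) (hn : 2 ≤ n) (k : ℕ)
    (hk : IsLeast {j : ℕ | 1 ≤ j ∧ Real.sqrt n ≤ 3 ^ j} k)
    (m : ℕ) (hm0 : 0 < m) (hm1 : Real.sqrt n < m) (hm2 : m < 3 ^ k) :
    ∃ a b : ℕ, 1 ≤ a ∧ a < b ∧ b ≤ n ∧ b ^ 3 + b ≡ a ^ 3 + a [MOD m ^ 2] := by
  obtain ⟨⟨hk1, hk2⟩, hmin⟩ := hk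
  obtain ⟨j, rfl⟩ : ∃ j, k = j + 1 := ⟨k - 1, by omega⟩
  have hlt : (3 : ℝ) ^ j < Real.sqrt n := by
    rcases Nat.eq_zero_or_pos j with rfl | hj
    · rw [pow_zero, Real.lt_sqrt (by norm_num)]
      have : (2 : ℝ) ≤ n := by exact_mod_cast hn
      linarith
    · by_contra hcon
      have := hmin ⟨hj, not_lt.mp hcon⟩
      omega
  have h1 : 3 ^ j < m := by
    have : (3 : ℝ) ^ j < m := hlt.trans hm1
    exact_mod_cast this
  have h9 : 9 ^ j < n := by
    rw [Real.lt_sqrt (by positivity)] at hlt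
    have e : ((3 : ℝ) ^ j) ^ 2 = 9 ^ j := by
      rw [← pow_mul, mul_comm, pow_mul]; norm_num
    rw [e] at hlt
    exact_mod_cast hlt
  obtain ⟨a, b, ha, hab, hb, h⟩ := col_main m j h1 hm2
  exact ⟨a, b, ha, hab, by omega, h⟩
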